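/- Suppose r or ℓ is odd, and both pairs (u₁,v₁) and (u₂,v₂) generate brickwork MPUs invariant under entrywise complex conjugation (conj(U^{(N)}[u_i,v_i]) = U^{(N)}[u_i,v_i] for all N). Then (u₁,v₁) and (u₂,v₂) are strictly equivalent under conjugation if and only if det(u₁v₁) = det(u₂v₂), where u_i is regarded as an rℓ×d² matrix and v_i as a d²×rℓ matrix. -/

import Mathlib

/-!
Conjugation invariance is a gauge symmetry: comparing the two layers of the brickwork circuit with
their conjugates for `N = 1` and `N = 2` yields unitaries `x, y` with `u = (x ⊗ y) ū` and
`v̄ = v (y ⊗ x)` (`exists_conj_gauge`). Conjugating twice gives `x x̄ = c`, `y ȳ = c⁻¹` with `c = ±1`,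
and taking determinants of `x = c xᵀ`, `y = c⁻¹ yᵀ` shows `c = 1` when `r` or `ℓ` is odd. The
symmetric unitaries `x, y` then have Takagi factorizations `w wᵀ`, `z zᵀ`, and regauging by `w†, z†`
makes `u` and `v` real (`exists_real_gauge`).

The determinant `det(uv)` is gauge invariant, and equals `±1` on real pairs; being continuous, it is
constant along a path of conjugation-invariant pairs. Conversely, two real pairs with equal `det(uv)`
differ by orthogonal matrices acting on `u` and on `v`, of the same determinant. If it is `-1`, a real
gauge transformation with `det(x ⊗ y) = -1` makes it `1`; such a gauge exists because `r` or `ℓ` is odd.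
Both matrices are then joined to the identity within the special orthogonal group, whose
path-connectedness follows from the Cartan–Dieudonné theorem (`joinedIn_one_of_det`).
-/


open scoped Kronecker Matrix

/-- The cyclic successor on `Fin N`. -/
def nextIdx {N : ℕ} (n : Fin N) : Fin N := ⟨(n.val + 1) % N, Nat.mod_lt _ n.pos⟩

/-- The brickwork MPU `U^{(N)}[u,v]` on a ring of `2N` spins of dimension `d`. -/
noncomputable def brickwork (d l r : ℕ)
    (u : Matrix (Fin l × Fin r) (Fin d × Fin d) ℂ)
    (v : Matrix (Fin d × Fin d) (Fin r × Fin l) ℂ) (N : ℕ) :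
    Matrix (Fin N → Fin d × Fin d) (Fin N → Fin d × Fin d) ℂ :=
  Matrix.of fun x y =>
    ∑ z : Fin N → Fin l × Fin r,
      (∏ n : Fin N, v ((x n).2, (x (nextIdx n)).1) ((z n).2, (z (nextIdx n)).1)) *
      (∏ n : Fin N, u (z n) (y n))

/-- `u` and `v` are both unitary. -/
def IsUnitaryPair (d l r : ℕ) (u : Matrix (Fin l × Fin r) (Fin d × Fin d) ℂ)
    (v : Matrix (Fin d × Fin d) (Fin r × Fin l) ℂ) : Prop :=
  uᴴ * u = 1 ∧ u * uᴴ = 1 ∧ vᴴ * v = 1 ∧ v * vᴴ = 1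

/-- The brickwork MPUs generated by `(u,v)` are invariant under entrywise conjugation. -/
def ConjInvariant (d l r : ℕ) (u : Matrix (Fin l × Fin r) (Fin d × Fin d) ℂ)
    (v : Matrix (Fin d × Fin d) (Fin r × Fin l) ℂ) : Prop :=
  ∀ N : ℕ, 1 ≤ N → (brickwork d l r u v N).map (starRingEnd ℂ) = brickwork d l r u v N

/-- `(u',v')` is obtained from `(u,v)` by the gauge `u' = (x⊗y)u`, `v' = v(y†⊗x†)` for some
unitaries `x`, `y`; such pairs generate the same brickwork MPUs. -/
def GaugeRelated (d l r : ℕ) (u : Matrix (Fin l × Fin r) (Fin d × Fin d) ℂ)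
    (v : Matrix (Fin d × Fin d) (Fin r × Fin l) ℂ)
    (u' : Matrix (Fin l × Fin r) (Fin d × Fin d) ℂ)
    (v' : Matrix (Fin d × Fin d) (Fin r × Fin l) ℂ) : Prop :=
  ∃ (x : Matrix (Fin l) (Fin l) ℂ) (y : Matrix (Fin r) (Fin r) ℂ),
    x ∈ Matrix.unitaryGroup (Fin l) ℂ ∧ y ∈ Matrix.unitaryGroup (Fin r) ℂ ∧
    u' = (x ⊗ₖ y) * u ∧ v' = v * (yᴴ ⊗ₖ xᴴ)

/-- `(u₁,v₁)` and `(u₂,v₂)` are strictly equivalent under conjugation: they can be joined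
by a continuous path of unitary pairs, all of whose brickwork MPUs are conjugation
invariant, whose endpoints are gauge-related to `(u₁,v₁)` and `(u₂,v₂)` respectively. -/
def StrictEquivConj (d l r : ℕ)
    (u₁ : Matrix (Fin l × Fin r) (Fin d × Fin d) ℂ)
    (v₁ : Matrix (Fin d × Fin d) (Fin r × Fin l) ℂ)
    (u₂ : Matrix (Fin l × Fin r) (Fin d × Fin d) ℂ)
    (v₂ : Matrix (Fin d × Fin d) (Fin r × Fin l) ℂ) : Prop :=
  ∃ (u : ℝ → Matrix (Fin l × Fin r) (Fin d × Fin d) ℂ)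
    (v : ℝ → Matrix (Fin d × Fin d) (Fin r × Fin l) ℂ),
    ContinuousOn u (Set.Icc 0 1) ∧ ContinuousOn v (Set.Icc 0 1) ∧
    (∀ t ∈ Set.Icc (0:ℝ) 1, IsUnitaryPair d l r (u t) (v t)) ∧
    GaugeRelated d l r u₁ v₁ (u 0) (v 0) ∧
    GaugeRelated d l r u₂ v₂ (u 1) (v 1) ∧
    (∀ t ∈ Set.Icc (0:ℝ) 1, ConjInvariant d l r (u t) (v t))

/-- The determinant `det(uv)` of the composite, with `u` regarded as an `rℓ×d²` matrix and
`v` as a `d²×rℓ` matrix. -/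
noncomputable def detUV (d l r : ℕ) (u : Matrix (Fin l × Fin r) (Fin d × Fin d) ℂ)
    (v : Matrix (Fin d × Fin d) (Fin r × Fin l) ℂ) : ℂ :=
  ((u * v).submatrix id (Prod.swap : Fin l × Fin r → Fin r × Fin l)).det


/-! ### Path-connectedness of the special orthogonal group -/

/-- The matrix of the reflection in the hyperplane orthogonal to `v`; for `v = 0` the convention
`2 / 0 = 0` makes it the identity. -/
noncomputable def householder {n : Type*} [Fintype n] [DecidableEq n] (v : n → ℝ) :
    Matrix n n ℝ :=
  1 - (2 / (v ⬝ᵥ v)) • Matrix.vecMulVec v v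

section Orthogonal
variable {n : Type*} [Fintype n] [DecidableEq n]

lemma householder_zero : householder (0 : n → ℝ) = 1 := by
  simp [householder]

lemma householder_neg (v : n → ℝ) : householder (-v) = householder v := by
  simp [householder, Matrix.neg_vecMulVec, Matrix.vecMulVec_neg]

lemma householder_transpose (v : n → ℝ) : (householder v)ᵀ = householder v := by
  simp [householder, Matrix.transpose_vecMulVec]

lemma householder_mul_self (v : n → ℝ) : householder v * householder v = 1 := by
  rcases eq_or_ne v 0 with rfl | hv
  · simp [householder_zero]
  have h : v ⬝ᵥ v ≠ 0 := fun h => hv (dotProduct_self_eq_zero.mp h)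
  have h2 : Matrix.vecMulVec v v * Matrix.vecMulVec v v = (v ⬝ᵥ v) • Matrix.vecMulVec v v := by
    rw [Matrix.vecMulVec_mul_vecMulVec]
    ext i j
    simp [Matrix.vecMulVec_apply]
    ring
  simp only [householder, sub_mul, mul_sub, one_mul, mul_one, smul_mul_assoc, mul_smul_comm, h2,
    smul_smul]
  ext i j
  simp
  field_simp
  ring

lemma householder_mem (v : n → ℝ) : householder v ∈ Matrix.orthogonalGroup n ℝ := by
  rw [Matrix.mem_orthogonalGroup_iff, householder_transpose, householder_mul_self]

lemma householder_det {v : n → ℝ} (hv : v ≠ 0) : (householder v).det = -1 := by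
  have h : v ⬝ᵥ v ≠ 0 := fun h => hv (dotProduct_self_eq_zero.mp h)
  have : householder v = 1 + Matrix.replicateCol Unit ((-(2 / (v ⬝ᵥ v))) • v) *
      Matrix.replicateRow Unit v := by
    rw [← Matrix.vecMulVec_eq]
    simp [householder, Matrix.smul_vecMulVec, sub_eq_add_neg]
  rw [this, Matrix.det_one_add_replicateCol_mul_replicateRow, dotProduct_smul, smul_eq_mul]
  field_simp
  norm_num

lemma toMatrix_reflection (v : EuclideanSpace ℝ n) :
    LinearMap.toMatrixOrthonormal (EuclideanSpace.basisFun n ℝ)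
      (((ℝ ∙ v)ᗮ.reflection).toLinearEquiv : EuclideanSpace ℝ n →ₗ[ℝ] EuclideanSpace ℝ n) =
      householder v.ofLp := by
  ext i j
  rw [LinearMap.toMatrixOrthonormal_apply_apply]
  have h : ‖v‖ ^ 2 = v.ofLp ⬝ᵥ v.ofLp := by
    rw [EuclideanSpace.norm_sq_eq]; simp [dotProduct, sq]
  have h3 : inner ℝ (EuclideanSpace.basisFun n ℝ i) ((ℝ ∙ v)ᗮ.reflection
     (EuclideanSpace.basisFun n ℝ j)) = householder v.ofLp i j := by
    rw [Submodule.reflection_orthogonal_apply, Submodule.reflection_singleton_apply]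
    simp [householder, h, Matrix.vecMulVec_apply, inner_sub_right,
      Matrix.one_apply, EuclideanSpace.inner_single_left, EuclideanSpace.inner_single_right,
      PiLp.single_apply, eq_comm (a := i) (b := j)]
    ring
  exact h3

/-- Cartan–Dieudonné in matrix form. Zero vectors are allowed in the list. -/
lemma exists_householder_prod {O : Matrix n n ℝ} (hO : O ∈ Matrix.orthogonalGroup n ℝ) :
    ∃ L : List (n → ℝ), O = (L.map householder).prod := by
  set T := LinearMap.toMatrixOrthonormal (EuclideanSpace.basisFun n ℝ) with hT
  set f := T.symm O with hf
  have hs : star f * f = 1 := by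
    rw [hf, ← map_star, ← map_mul, Matrix.mem_unitaryGroup_iff'.mp hO, map_one]
  let li : EuclideanSpace ℝ n →ₗᵢ[ℝ] EuclideanSpace ℝ n := f.isometryOfInner (by
    intro x y
    rw [← LinearMap.adjoint_inner_right, ← LinearMap.star_eq_adjoint, ← Module.End.mul_apply, hs]
    rfl)
  let φ := li.toLinearIsometryEquiv rfl
  have hφ : T (φ.toLinearEquiv : EuclideanSpace ℝ n →ₗ[ℝ] EuclideanSpace ℝ n) = O := by
    have : (φ.toLinearEquiv : EuclideanSpace ℝ n →ₗ[ℝ] EuclideanSpace ℝ n) = f := by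
      ext x; rfl
    rw [this, hf]; simp
  obtain ⟨L, -, hL⟩ := φ.reflections_generate_dim
  refine ⟨L.map WithLp.ofLp, ?_⟩
  rw [← hφ, hL]
  clear hL
  induction L with
  | nil => 
    simp only [List.map_nil, List.prod_nil]
    exact map_one T
  | cons v L ih =>
    simp only [List.map_cons, List.prod_cons]
    rw [← ih, ← toMatrix_reflection, ← hT, ← map_mul]
    rfl

/-- Any two genuine reflections are joined inside the orthogonal group: move `v` to `w` along the
segment between them, or to `-w` if that segment passes through `0`. -/
lemma joinedIn_householder {v w : n → ℝ} (hv : v ≠ 0) (hw : w ≠ 0) :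
    JoinedIn (Matrix.orthogonalGroup n ℝ : Set (Matrix n n ℝ)) (householder v)
      (householder w) := by
  have key : ∀ w : n → ℝ, (∀ t ∈ Set.Icc (0:ℝ) 1, (1 - t) • v + t • w ≠ 0) →
      JoinedIn (Matrix.orthogonalGroup n ℝ : Set (Matrix n n ℝ)) (householder v)
      (householder w) := by
    intro w h
    refine JoinedIn.ofLine (f := fun t : ℝ => householder ((1 - t) • v + t • w)) ?_
      (by simp) (by simp) ?_
    · unfold householder
      refine continuousOn_const.sub (ContinuousOn.fun_smul (ContinuousOn.div (f := fun _ : ℝ => (2:ℝ)) continuousOn_const ?_ ?_) ?_)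
      · exact Continuous.continuousOn (by fun_prop)
      · intro t ht h0
        exact h t ht (dotProduct_self_eq_zero.mp h0)
      · refine Continuous.continuousOn (Continuous.matrix_vecMulVec ?_ ?_) <;> fun_prop
    · rintro _ ⟨t, -, rfl⟩
      exact householder_mem _
  by_cases h : ∀ t ∈ Set.Icc (0:ℝ) 1, (1 - t) • v + t • w ≠ 0
  · exact key w h
  · push Not at h
    obtain ⟨t, ht, h⟩ := h
    rw [← householder_neg w]
    refine key (-w) ?_
    intro s hs h'
    obtain ⟨i, hi⟩ := Function.ne_iff.mp hv
    have ht0 : t ≠ 0 := by rintro rfl; simp at h; exact hv h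
    have e1 := congrFun h i
    have e2 := congrFun h' i
    simp at e1 e2 hi
    have e3 : ((1 - s) * t + s * (1 - t)) * v i = 0 := by linear_combination t * e2 + s * e1
    rcases mul_eq_zero.mp e3 with e | e
    · have a1 : 0 ≤ (1 - s) * t := mul_nonneg (by linarith [hs.2]) ht.1
      have a2 : 0 ≤ s * (1 - t) := mul_nonneg hs.1 (by linarith [ht.2])
      have b1 : (1 - s) * t = 0 := by linarith
      have b2 : s * (1 - t) = 0 := by linarith
      have s1 : s = 1 := by
        rcases mul_eq_zero.mp b1 with h | h
        · linarith
        · exact absurd h ht0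
      subst s1
      simp at h'
      exact hw h'
    · exact hi e

lemma joinedIn_mul {a b c d : Matrix n n ℝ}
    (h : JoinedIn (Matrix.orthogonalGroup n ℝ : Set (Matrix n n ℝ)) a b)
    (h' : JoinedIn (Matrix.orthogonalGroup n ℝ : Set (Matrix n n ℝ)) c d) :
    JoinedIn (Matrix.orthogonalGroup n ℝ : Set (Matrix n n ℝ)) (a * c) (b * d) := by
  obtain ⟨p, hp⟩ := h
  obtain ⟨q, hq⟩ := h'
  exact ⟨p.mul q, fun t => mul_mem (hp t) (hq t)⟩

/-- A product of reflections is joined to `1` or to a fixed reflection according to its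
determinant, so every orthogonal matrix of determinant `1` is joined to `1`. -/
lemma joinedIn_one_of_det {O : Matrix n n ℝ} (hO : O ∈ Matrix.orthogonalGroup n ℝ)
    (hdet : O.det = 1) :
    JoinedIn (Matrix.orthogonalGroup n ℝ : Set (Matrix n n ℝ)) 1 O := by
  rcases isEmpty_or_nonempty n with hn | ⟨⟨i⟩⟩
  · rw [Subsingleton.elim O 1]
    exact JoinedIn.refl (one_mem _)
  let w : n → ℝ := Pi.single i 1
  have hw : w ≠ 0 := by simp [w]
  have key : ∀ L : List (n → ℝ),
      (((L.map householder).prod.det = 1 ∧ JoinedIn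
        (Matrix.orthogonalGroup n ℝ : Set (Matrix n n ℝ)) 1 (L.map householder).prod) ∨
      ((L.map householder).prod.det = -1 ∧ JoinedIn
        (Matrix.orthogonalGroup n ℝ : Set (Matrix n n ℝ)) (householder w)
          (L.map householder).prod)) := by
    intro L
    induction L with
    | nil => exact Or.inl ⟨by simp, JoinedIn.refl (one_mem _)⟩
    | cons v L ih =>
      simp only [List.map_cons, List.prod_cons]
      rcases eq_or_ne v 0 with rfl | hv
      · simpa [householder_zero] using ih
      have hj := joinedIn_householder hw hv
      rcases ih with ⟨h1, h2⟩ | ⟨h1, h2⟩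
      · right
        refine ⟨by rw [Matrix.det_mul, h1, householder_det hv]; norm_num, ?_⟩
        simpa using joinedIn_mul hj h2
      · left
        refine ⟨by rw [Matrix.det_mul, h1, householder_det hv]; norm_num, ?_⟩
        simpa [householder_mul_self] using joinedIn_mul hj h2
  obtain ⟨L, rfl⟩ := exists_householder_prod hO
  rcases key L with ⟨-, h⟩ | ⟨h, -⟩
  · exact h
  · rw [hdet] at h; norm_num at h

/-- `joinedIn_one_of_det` for complex unitary matrices with real entries, which are the form in
which special orthogonal matrices occur below. -/
lemma exists_path_of_real {O : Matrix n n ℂ} (hO : O ∈ Matrix.unitaryGroup n ℂ)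
    (hreal : O.map (starRingEnd ℂ) = O) (hdet : O.det = 1) :
    ∃ p : ℝ → Matrix n n ℂ, Continuous p ∧ (∀ t, p t ∈ Matrix.unitaryGroup n ℂ) ∧
      (∀ t, (p t).map (starRingEnd ℂ) = p t) ∧ p 0 = 1 ∧ p 1 = O := by
  let c : Matrix n n ℝ →+* Matrix n n ℂ := Complex.ofRealHom.mapMatrix
  have hc : ∀ M, c M = M.map Complex.ofRealHom := fun M => rfl
  have hcinj : Function.Injective c := fun A B h => by
    ext i j
    have := congrFun (congrFun h i) j
    simpa [hc] using this
  have hstar : ∀ M, star (c M) = c (star M) := fun M => by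
    ext i j; simp [hc, Matrix.star_apply]
  obtain ⟨R, hR⟩ : ∃ R, c R = O := by
    refine ⟨O.map Complex.re, ?_⟩
    ext i j
    have := congrFun (congrFun hreal i) j
    simpa [hc] using Complex.conj_eq_iff_re.mp this
  have hRo : R ∈ Matrix.orthogonalGroup n ℝ := by
    refine Matrix.mem_unitaryGroup_iff.mpr (hcinj ?_)
    rw [map_mul, ← hstar, hR, map_one, (Matrix.mem_unitaryGroup_iff).mp hO]
  have hRd : R.det = 1 := by
    have h : ((R.det : ℝ) : ℂ) = 1 := by
      rw [← hdet, ← hR]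
      exact RingHom.map_det Complex.ofRealHom R
    exact_mod_cast h
  obtain ⟨γ, hγ⟩ := joinedIn_one_of_det hRo hRd
  have hmem : ∀ t, γ.extend t ∈ Matrix.orthogonalGroup n ℝ := fun t => hγ _
  refine ⟨fun t => c (γ.extend t), ?_, ?_, ?_, ?_, ?_⟩
  · exact γ.continuous_extend.matrix_map Complex.continuous_ofReal
  · intro t
    rw [Matrix.mem_unitaryGroup_iff, hstar, ← map_mul,
      Matrix.mem_unitaryGroup_iff.mp (hmem t), map_one]
  · intro t
    ext i j
    simp [hc]
  · simp
  · simp [hR]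

end Orthogonal

/-! ### Takagi factorization of symmetric unitaries -/

section Takagi
variable {n : Type*} [Fintype n] [DecidableEq n]
open scoped Matrix.Norms.L2Operator

/-- The factor `w` is a square root of `x` given by the functional calculus. The spectrum is finite,
so `w` is a polynomial in `x`, hence symmetric along with `x`. -/
lemma exists_takagi {x : Matrix n n ℂ} (hx : x ∈ Matrix.unitaryGroup n ℂ) (hsymm : xᵀ = x) :
    ∃ w ∈ Matrix.unitaryGroup n ℂ, x = w * wᵀ := by
  have hn : IsStarNormal x := ⟨by
    rw [commute_iff_eq, (Matrix.mem_unitaryGroup_iff'.mp hx), Matrix.mem_unitaryGroup_iff.mp hx]⟩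
  let s : ℂ → ℂ := fun z => Complex.exp (Complex.arg z / 2 * Complex.I)
  have hs2 : ∀ z ∈ spectrum ℂ x, s z * s z = z := by
    intro z hz
    have h1 : ‖z‖ = 1 := by
      simpa using spectrum.subset_circle_of_unitary (𝕜 := ℂ) hx hz
    rw [← Complex.exp_add]
    conv_rhs => rw [← Complex.norm_mul_exp_arg_mul_I z, h1]
    simp; congr 1; ring
  have hs1 : ∀ z, s z * star (s z) = 1 := by
    intro z
    have : ‖s z‖ = 1 := by
      have := Complex.norm_exp_ofReal_mul_I (Complex.arg z / 2)
      simpa [s] using this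
    have := Complex.mul_conj' (s z)
    simpa [‹‖s z‖ = 1›] using this
  have hfin := x.finite_spectrum
  have hcont : ∀ f : ℂ → ℂ, ContinuousOn f (spectrum ℂ x) := fun f => hfin.continuousOn f
  have hsq : cfc s x * cfc s x = x := by
    rw [← cfc_mul s s x (hcont _) (hcont _)]
    conv_rhs => rw [← cfc_id ℂ x]
    exact cfc_congr fun z hz => hs2 z hz
  refine ⟨cfc s x, ?_, ?_⟩
  · rw [Matrix.mem_unitaryGroup_iff, ← cfc_star, ← cfc_mul _ _ x (hcont _) (hcont _)]
    simp only [hs1]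
    exact cfc_const_one ℂ x
  · have hT : (cfc s x)ᵀ = cfc s x := by
      -- On the finite spectrum the square root agrees with an interpolation polynomial.
      let q := Lagrange.interpolate hfin.toFinset id s
      have hq : cfc s x = Polynomial.aeval x q := by
        rw [← cfc_polynomial q x]
        refine cfc_congr fun z hz => ?_
        have := Lagrange.eval_interpolate_at_node s (s := hfin.toFinset) (v := id)
          Function.injective_id.injOn (hfin.mem_toFinset.mpr hz)
        exact this.symm
      rw [hq, Polynomial.aeval_eq_sum_range, Matrix.transpose_sum]
      simp [Matrix.transpose_smul, Matrix.transpose_pow, hsymm]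
    rw [hT, hsq]
end Takagi

/-! ### Kronecker products and unitarity -/

section Kron
open scoped ComplexOrder
variable {m n : Type*} [DecidableEq m] [DecidableEq n]

lemma kronecker_eq_one [Nonempty m] [Nonempty n] {x : Matrix m m ℂ} {y : Matrix n n ℂ}
    (h : x ⊗ₖ y = 1) : ∃ c : ℂ, c ≠ 0 ∧ x = c • 1 ∧ y = c⁻¹ • 1 := by
  obtain ⟨a₀⟩ := ‹Nonempty m›
  obtain ⟨b₀⟩ := ‹Nonempty n›
  have e : ∀ a a' b b', x a a' * y b b' = (1 : Matrix m m ℂ) a a' * (1 : Matrix n n ℂ) b b' := by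
    intro a a' b b'
    have := congrFun (congrFun h (a, b)) (a', b')
    rw [Matrix.kroneckerMap_apply] at this
    rw [this, ← Matrix.one_kronecker_one, Matrix.kroneckerMap_apply]
  have h0 : x a₀ a₀ * y b₀ b₀ = 1 := by simpa using e a₀ a₀ b₀ b₀
  have hx0 : x a₀ a₀ ≠ 0 := left_ne_zero_of_mul_eq_one h0
  have hy0 : y b₀ b₀ ≠ 0 := right_ne_zero_of_mul_eq_one h0
  refine ⟨x a₀ a₀, hx0, ?_, ?_⟩
  · ext a a'
    have := e a a' b₀ b₀
    simp only [Matrix.one_apply_eq, mul_one] at this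
    rw [Matrix.smul_apply, smul_eq_mul, ← this]
    linear_combination (-x a a') * h0
  · ext b b'
    have := e a₀ a₀ b b'
    simp only [Matrix.one_apply_eq, one_mul] at this
    rw [Matrix.smul_apply, smul_eq_mul, ← this]
    field_simp

/-- If a Kronecker product is unitary, its two factors can be rescaled to be unitary. -/
lemma exists_unitary_kronecker [Fintype m] [Fintype n] [Nonempty m] [Nonempty n] {x : Matrix m m ℂ} {y : Matrix n n ℂ}
    (h : x ⊗ₖ y ∈ Matrix.unitaryGroup (m × n) ℂ) :
    ∃ x' ∈ Matrix.unitaryGroup m ℂ, ∃ y' ∈ Matrix.unitaryGroup n ℂ, x' ⊗ₖ y' = x ⊗ₖ y := by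
  have h1 : (x * xᴴ) ⊗ₖ (y * yᴴ) = 1 := by
    rw [Matrix.mul_kronecker_mul, ← Matrix.conjTranspose_kronecker]
    exact Matrix.mem_unitaryGroup_iff.mp h
  obtain ⟨c, hc, hx, hy⟩ := kronecker_eq_one h1
  have hc0 : 0 ≤ c := by
    obtain ⟨a₀⟩ := ‹Nonempty m›
    have := (Matrix.posSemidef_self_mul_conjTranspose x).diag_nonneg (i := a₀)
    simpa [hx] using this
  obtain ⟨s, hs, rfl⟩ : ∃ s : ℝ, s ≠ 0 ∧ c = (s : ℂ) * s := by
    obtain ⟨hre, him⟩ := Complex.le_def.mp hc0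
    have hcr : c = (c.re : ℂ) := Complex.ext (by simp) (by simpa using him.symm)
    refine ⟨√c.re, ?_, ?_⟩
    · intro h0
      apply hc
      rw [Real.sqrt_eq_zero (by simpa using hre)] at h0
      rw [hcr, h0]; simp
    · rw [← Complex.ofReal_mul, Real.mul_self_sqrt (by simpa using hre), ← hcr]
  have hs' : (s : ℂ) ≠ 0 := by exact_mod_cast hs
  refine ⟨(s : ℂ)⁻¹ • x, ?_, (s : ℂ) • y, ?_, ?_⟩
  · rw [Matrix.mem_unitaryGroup_iff, Matrix.star_eq_conjTranspose, Matrix.conjTranspose_smul,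
      smul_mul_smul_comm, hx, smul_smul]
    have : (s : ℂ)⁻¹ * star (s : ℂ)⁻¹ * (s * s) = 1 := by simp; field_simp
    rw [this, one_smul]
  · rw [Matrix.mem_unitaryGroup_iff, Matrix.star_eq_conjTranspose, Matrix.conjTranspose_smul,
      smul_mul_smul_comm, hy, smul_smul]
    have : (s : ℂ) * star (s : ℂ) * (s * s : ℂ)⁻¹ = 1 := by simp; field_simp
    rw [this, one_smul]
  · rw [Matrix.smul_kronecker, Matrix.kronecker_smul, smul_smul, inv_mul_cancel₀ hs', one_smul]

lemma eq_smul_transpose [Fintype m] {x : Matrix m m ℂ} (hx : x ∈ Matrix.unitaryGroup m ℂ) {c : ℂ}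
    (h : x * x.map (starRingEnd ℂ) = c • 1) : x = c • xᵀ := by
  have h1 : x.map (starRingEnd ℂ) * xᵀ = 1 := by
    have := congrArg Matrix.transpose (Matrix.mem_unitaryGroup_iff.mp hx)
    rw [Matrix.transpose_mul, Matrix.transpose_one] at this
    exact this
  calc x = x * (x.map (starRingEnd ℂ) * xᵀ) := by rw [h1, mul_one]
    _ = c • xᵀ := by rw [← mul_assoc, h, smul_mul_assoc, one_mul]

end Kron

/-! ### The brickwork operator as a product of two layers -/

section Pi

/-- The `N`-fold tensor power of a matrix, indexed by functions on `Fin N`. -/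
def piMat {m n : Type*} (N : ℕ) (M : Matrix m n ℂ) : Matrix (Fin N → m) (Fin N → n) ℂ :=
  Matrix.of fun x y => ∏ k, M (x k) (y k)

lemma piMat_mul {m n o : Type*} [Fintype n] (N : ℕ) (A : Matrix m n ℂ) (B : Matrix n o ℂ) :
    piMat N A * piMat N B = piMat N (A * B) := by
  classical
  ext x y
  simp only [piMat, Matrix.mul_apply, Matrix.of_apply, Finset.prod_univ_sum,
    Fintype.piFinset_univ, Finset.prod_mul_distrib]

lemma piMat_one {n : Type*} [DecidableEq n] (N : ℕ) : piMat N (1 : Matrix n n ℂ) = 1 := by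
  ext x y
  simp only [piMat, Matrix.of_apply, Matrix.one_apply, funext_iff]
  rw [Finset.prod_ite_zero]
  simp

lemma piMat_conjTranspose {m n : Type*} (N : ℕ) (A : Matrix m n ℂ) :
    (piMat N A)ᴴ = piMat N Aᴴ := by
  ext x y
  simp [piMat, Matrix.conjTranspose_apply]

lemma piMat_map {m n : Type*} (N : ℕ) (A : Matrix m n ℂ) :
    (piMat N A).map (starRingEnd ℂ) = piMat N (A.map (starRingEnd ℂ)) := by
  ext x y
  simp [piMat]

/-- Regrouping of the `2N` sites of the ring from the pairs `(2n-1, 2n)` to the pairs `(2n, 2n+1)`. -/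
def shiftPairs {a b : Type*} {N : ℕ} (z : Fin N → a × b) : Fin N → b × a :=
  fun n => ((z n).2, (z (nextIdx n)).1)

lemma shiftPairs_bijective {a b : Type*} {N : ℕ}
    (h : Function.Bijective (nextIdx : Fin N → Fin N)) :
    Function.Bijective (shiftPairs : (Fin N → a × b) → (Fin N → b × a)) := by
  constructor
  · intro z z' hz
    funext n
    refine Prod.ext ?_ (congrArg Prod.fst (congrFun hz n))
    obtain ⟨k, rfl⟩ := h.2 n
    exact congrArg Prod.snd (congrFun hz k)
  · intro w
    let e := Equiv.ofBijective _ h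
    refine ⟨fun n => ((w (e.symm n)).2, (w n).1), ?_⟩
    funext n
    refine Prod.ext rfl ?_
    change (w (e.symm (e n))).2 = _
    simp

end Pi

section Main
variable {d l r : ℕ} {u : Matrix (Fin l × Fin r) (Fin d × Fin d) ℂ}
  {v : Matrix (Fin d × Fin d) (Fin r × Fin l) ℂ}

lemma brickwork_eq (N : ℕ) :
    brickwork d l r u v N = (piMat N v).submatrix shiftPairs shiftPairs * piMat N u := by
  ext x y
  simp [brickwork, piMat, Matrix.mul_apply, shiftPairs]

/-- Conjugation invariance says `V̄ W̄ = V W` for the two layers `V` (copies of `v`) and `W` (copies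
of `u`). Moving the layers to opposite sides gives `V† V̄ = W W̄†`, stated here entrywise. -/
lemma prod_eq_of_conjInvariant (hu : IsUnitaryPair d l r u v) (hc : ConjInvariant d l r u v)
    {N : ℕ} (hN : 1 ≤ N) (hb : Function.Bijective (nextIdx : Fin N → Fin N))
    (z z' : Fin N → Fin l × Fin r) :
    ∏ n, (vᴴ * v.map (starRingEnd ℂ)) (shiftPairs z n) (shiftPairs z' n) =
      ∏ n, (u * (u.map (starRingEnd ℂ))ᴴ) (z n) (z' n) := by
  obtain ⟨h1, h2, h3, h4⟩ := hu
  have h := hc N hN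
  rw [brickwork_eq, Matrix.map_mul, piMat_map, ← Matrix.submatrix_map, piMat_map] at h
  have hbd := shiftPairs_bijective (a := Fin d) (b := Fin d) hb
  have hbl := shiftPairs_bijective (a := Fin l) (b := Fin r) hb
  have hconj : u.map (starRingEnd ℂ) * (u.map (starRingEnd ℂ))ᴴ = 1 := by
    have := congrArg (fun M => M.map (starRingEnd ℂ)) h2
    simp only [Matrix.map_mul] at this
    rw [Matrix.map_one _ (map_zero _) (map_one _)] at this
    exact this
  have h' := congrArg (fun M => ((piMat N v).submatrix shiftPairs shiftPairs)ᴴ * M *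
    (piMat N (u.map (starRingEnd ℂ)))ᴴ) h
  simp only [Matrix.conjTranspose_submatrix, piMat_conjTranspose] at h'
  rw [← Matrix.mul_assoc, Matrix.mul_assoc _ (piMat N _) (piMat N _), piMat_mul, hconj, piMat_one,
    Matrix.mul_one, ← Matrix.mul_assoc, ← Matrix.submatrix_mul _ _ _ _ _ hbd,
    ← Matrix.submatrix_mul _ _ _ _ _ hbd, piMat_mul, piMat_mul, h3, piMat_one,
    Matrix.submatrix_one _ hbl.1, Matrix.one_mul, piMat_mul] at h'
  exact congrFun (congrFun h' z) z'

/-- A conjugation-invariant pair is related to its complex conjugate by a gauge transformation.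
The case `N = 1` identifies `v† v̄` with the swap of `A = u ū†`. The case `N = 2` then says that
`A ⊗ A` is also a product across the complementary pairing of the sites, so `A = x ⊗ y`. -/
lemma exists_conj_gauge (hl : 1 ≤ l) (hr : 1 ≤ r) (hu : IsUnitaryPair d l r u v)
    (hc : ConjInvariant d l r u v) :
    ∃ x ∈ Matrix.unitaryGroup (Fin l) ℂ, ∃ y ∈ Matrix.unitaryGroup (Fin r) ℂ,
      u = (x ⊗ₖ y) * u.map (starRingEnd ℂ) ∧ v.map (starRingEnd ℂ) = v * (y ⊗ₖ x) := by
  have : NeZero l := ⟨by omega⟩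
  have : NeZero r := ⟨by omega⟩
  have n1 := prod_eq_of_conjInvariant hu hc (N := 1) le_rfl (by decide)
  have n2 := prod_eq_of_conjInvariant hu hc (N := 2) (by norm_num) (by decide)
  obtain ⟨h1, h2, h3, h4⟩ := hu
  set A := u * (u.map (starRingEnd ℂ))ᴴ with hA
  set B := vᴴ * v.map (starRingEnd ℂ) with hB
  have hconj : (u.map (starRingEnd ℂ))ᴴ * u.map (starRingEnd ℂ) = 1 := by
    have := congrArg (fun M => M.map (starRingEnd ℂ)) h1
    simp only [Matrix.map_mul] at this
    rw [Matrix.map_one _ (map_zero _) (map_one _)] at this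
    exact this
  have hAu : A ∈ Matrix.unitaryGroup (Fin l × Fin r) ℂ := by
    rw [Matrix.mem_unitaryGroup_iff, Matrix.star_eq_conjTranspose, hA, Matrix.conjTranspose_mul,
      Matrix.conjTranspose_conjTranspose, Matrix.mul_assoc, ← Matrix.mul_assoc _ _ uᴴ, hconj,
      Matrix.one_mul, h2]
  have hAB : ∀ a b a' b', B (b, a) (b', a') = A (a, b) (a', b') := by
    intro a b a' b'
    have := n1 (fun _ => (a, b)) (fun _ => (a', b'))
    simpa [shiftPairs] using this
  have hAA : ∀ a b a' b' c e c' e', A (c, b) (c', b') * A (a, e) (a', e') =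
      A (a, b) (a', b') * A (c, e) (c', e') := by
    intro a b a' b' c e c' e'
    have := n2 ![(a, b), (c, e)] ![(a', b'), (c', e')]
    simpa [shiftPairs, Fin.prod_univ_two, nextIdx, hAB] using this
  obtain ⟨⟨c, e⟩, ⟨c', e'⟩, hne⟩ : ∃ p q, A p q ≠ 0 := by
    by_contra! h0
    have hz : A = 0 := by ext p q; exact h0 p q
    have := Matrix.mem_unitaryGroup_iff.mp hAu
    rw [hz, zero_mul] at this
    exact zero_ne_one this
  have hprod : (Matrix.of fun a a' => A (a, e) (a', e') / A (c, e) (c', e')) ⊗ₖ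
      (Matrix.of fun b b' => A (c, b) (c', b')) = A := by
    ext ⟨a, b⟩ ⟨a', b'⟩
    have := hAA a b a' b' c e c' e'
    simp only [Matrix.kroneckerMap_apply, Matrix.of_apply]
    field_simp
    linear_combination this
  obtain ⟨x, hx, y, hy, hxy⟩ := exists_unitary_kronecker (hprod ▸ hAu)
  rw [hprod] at hxy
  refine ⟨x, hx, y, hy, ?_, ?_⟩
  · rw [hxy, hA, Matrix.mul_assoc, hconj, Matrix.mul_one]
  · have hBx : B = y ⊗ₖ x := by
      ext ⟨b, a⟩ ⟨b', a'⟩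
      rw [hAB, ← hxy]
      simp [mul_comm]
    rw [← hBx, hB, ← Matrix.mul_assoc, h4, Matrix.one_mul]

/-! ### Real representatives and the determinant -/

lemma eq_one_of_odd_pow {c : ℂ} (h2 : c * c = 1) {k : ℕ} (hk : Odd k) (h : c ^ k = 1) : c = 1 := by
  obtain ⟨j, rfl⟩ := hk
  rw [pow_succ, pow_mul, sq, h2, one_pow, one_mul] at h
  exact h

lemma scalar_pow_card_eq_one {m : Type*} [Fintype m] [DecidableEq m] {x : Matrix m m ℂ}
    (hx : x ∈ Matrix.unitaryGroup m ℂ) {c : ℂ} (h : x = c • xᵀ) : c ^ Fintype.card m = 1 := by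
  have hd : x.det ≠ 0 := by
    intro h0
    have := congrArg Matrix.det (Matrix.mem_unitaryGroup_iff.mp hx)
    rw [Matrix.det_mul, h0, zero_mul, Matrix.det_one] at this
    exact zero_ne_one this
  have := congrArg Matrix.det h
  rw [Matrix.det_smul, Matrix.det_transpose] at this
  exact mul_right_cancel₀ hd (by rw [← this, one_mul])

lemma GaugeRelated.isUnitaryPair {u' v'} (h : GaugeRelated d l r u v u' v')
    (hu : IsUnitaryPair d l r u v) : IsUnitaryPair d l r u' v' := by
  obtain ⟨x, y, hx, hy, rfl, rfl⟩ := h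
  obtain ⟨h1, h2, h3, h4⟩ := hu
  have a1 := Matrix.mem_unitaryGroup_iff.mp hx
  have a2 := Matrix.mem_unitaryGroup_iff'.mp hx
  have b1 := Matrix.mem_unitaryGroup_iff.mp hy
  have b2 := Matrix.mem_unitaryGroup_iff'.mp hy
  rw [Matrix.star_eq_conjTranspose] at a1 a2 b1 b2
  refine ⟨?_, ?_, ?_, ?_⟩
  · rw [Matrix.conjTranspose_mul, Matrix.mul_assoc, ← Matrix.mul_assoc _ (x ⊗ₖ y) u,
      Matrix.conjTranspose_kronecker, ← Matrix.mul_kronecker_mul, a2, b2, Matrix.one_kronecker_one,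
      Matrix.one_mul, h1]
  · rw [Matrix.conjTranspose_mul, Matrix.mul_assoc, ← Matrix.mul_assoc u, h2, Matrix.one_mul,
      Matrix.conjTranspose_kronecker, ← Matrix.mul_kronecker_mul, a1, b1, Matrix.one_kronecker_one]
  · rw [Matrix.conjTranspose_mul, Matrix.mul_assoc, ← Matrix.mul_assoc vᴴ, h3, Matrix.one_mul,
      Matrix.conjTranspose_kronecker, ← Matrix.mul_kronecker_mul]
    simp [a1, b1]
  · rw [Matrix.conjTranspose_mul, Matrix.mul_assoc, ← Matrix.mul_assoc (yᴴ ⊗ₖ xᴴ),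
      Matrix.conjTranspose_kronecker, ← Matrix.mul_kronecker_mul]
    simp [a2, b2, h4]

lemma GaugeRelated.trans {u' v' u'' v''} (h : GaugeRelated d l r u v u' v')
    (h' : GaugeRelated d l r u' v' u'' v'') : GaugeRelated d l r u v u'' v'' := by
  obtain ⟨x, y, hx, hy, rfl, rfl⟩ := h
  obtain ⟨x', y', hx', hy', rfl, rfl⟩ := h'
  refine ⟨x' * x, y' * y, mul_mem hx' hx, mul_mem hy' hy, ?_, ?_⟩
  · rw [Matrix.mul_kronecker_mul, Matrix.mul_assoc]
  · rw [Matrix.conjTranspose_mul, Matrix.conjTranspose_mul, Matrix.mul_kronecker_mul,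
      Matrix.mul_assoc]

lemma detUV_mul (P : Matrix (Fin l × Fin r) (Fin l × Fin r) ℂ)
    (Q : Matrix (Fin r × Fin l) (Fin r × Fin l) ℂ) :
    detUV d l r (P * u) (v * Q) = P.det * detUV d l r u v * Q.det := by
  have hs : Function.Bijective (Prod.swap : Fin l × Fin r → Fin r × Fin l) :=
    Prod.swap_bijective
  have : (P * u * (v * Q)).submatrix id (Prod.swap : Fin l × Fin r → Fin r × Fin l) =
      P * (u * v).submatrix id Prod.swap * Q.submatrix Prod.swap Prod.swap := by
    rw [← Matrix.submatrix_id_id P, ← Matrix.submatrix_mul _ _ _ _ _ Function.bijective_id,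
      ← Matrix.submatrix_mul _ _ _ _ _ hs]
    simp only [Matrix.mul_assoc, Matrix.submatrix_id_id]
  rw [detUV, this, Matrix.det_mul, Matrix.det_mul, detUV]
  congr 1
  exact Matrix.det_submatrix_equiv_self (Equiv.prodComm (Fin l) (Fin r)) Q

lemma GaugeRelated.detUV_eq {u' v'} (h : GaugeRelated d l r u v u' v') :
    detUV d l r u' v' = detUV d l r u v := by
  obtain ⟨x, y, hx, hy, rfl, rfl⟩ := h
  have a1 := congrArg Matrix.det (Matrix.mem_unitaryGroup_iff.mp hx)
  have b1 := congrArg Matrix.det (Matrix.mem_unitaryGroup_iff.mp hy)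
  rw [Matrix.star_eq_conjTranspose, Matrix.det_mul, Matrix.det_one] at a1 b1
  rw [detUV_mul, Matrix.det_kronecker, Matrix.det_kronecker]
  simp only [Fintype.card_fin]
  calc _ = (x.det * xᴴ.det) ^ r * (y.det * yᴴ.det) ^ l * detUV d l r u v := by ring
    _ = _ := by rw [a1, b1]; simp

/-- A conjugation-invariant pair is gauge related to a real one. The gauge `(x, y)` of
`exists_conj_gauge` satisfies `x = c xᵀ` and `y = c⁻¹ yᵀ` with `c = ±1`; oddness of `r` or `l` forces
`c = 1`, and the Takagi factors of the symmetric `x` and `y` give the required gauge. -/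
lemma exists_real_gauge (hl : 1 ≤ l) (hr : 1 ≤ r) (hodd : Odd r ∨ Odd l)
    (hu : IsUnitaryPair d l r u v) (hc : ConjInvariant d l r u v) :
    ∃ u' v', GaugeRelated d l r u v u' v' ∧ u'.map (starRingEnd ℂ) = u' ∧
      v'.map (starRingEnd ℂ) = v' := by
  have : NeZero l := ⟨by omega⟩
  have : NeZero r := ⟨by omega⟩
  obtain ⟨x, hx, y, hy, hxu, hyv⟩ := exists_conj_gauge hl hr hu hc
  obtain ⟨h1, h2, h3, h4⟩ := hu
  have hmm : ∀ {a b : Type} (M : Matrix a b ℂ),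
      (M.map (starRingEnd ℂ)).map (starRingEnd ℂ) = M := by
    intro a b M; ext i j; simp
  have hkm : ∀ {a b c e : Type} (M : Matrix a b ℂ) (M' : Matrix c e ℂ),
      (M ⊗ₖ M').map (starRingEnd ℂ) = M.map (starRingEnd ℂ) ⊗ₖ M'.map (starRingEnd ℂ) := by
    intro a b c e M M'; ext i j; simp
  -- Conjugating `u = (x ⊗ y) ū` and substituting it into itself.
  have hone : (x * x.map (starRingEnd ℂ)) ⊗ₖ (y * y.map (starRingEnd ℂ)) = 1 := by
    have hbar : u.map (starRingEnd ℂ) =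
        (x.map (starRingEnd ℂ) ⊗ₖ y.map (starRingEnd ℂ)) * u := by
      conv_lhs => rw [hxu]
      rw [Matrix.map_mul, hkm, hmm]
    rw [hbar, ← Matrix.mul_assoc, ← Matrix.mul_kronecker_mul] at hxu
    have := congrArg (· * uᴴ) hxu
    simp only [Matrix.mul_assoc, h2, Matrix.mul_one] at this
    exact this.symm
  obtain ⟨c, hc0, hcx, hcy⟩ := kronecker_eq_one hone
  have hxs := eq_smul_transpose hx hcx
  have hys := eq_smul_transpose hy hcy
  have hc2 : c * c = 1 := by
    have e : x = (c * c) • x := by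
      conv_lhs => rw [hxs]
      have := congrArg Matrix.transpose hxs
      rw [Matrix.transpose_smul, Matrix.transpose_transpose] at this
      rw [this, smul_smul]
    have e2 : (1 : Matrix (Fin l) (Fin l) ℂ) = (c * c) • 1 := by
      rw [← Matrix.mem_unitaryGroup_iff.mp hx, ← smul_mul_assoc, ← e]
    simpa using (congrFun (congrFun e2 0) 0).symm
  have hc1 : c = 1 := by
    rcases hodd with ho | ho
    · have := scalar_pow_card_eq_one hy hys
      rw [Fintype.card_fin, inv_pow, inv_eq_one] at this
      exact eq_one_of_odd_pow hc2 ho this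
    · have := scalar_pow_card_eq_one hx hxs
      rw [Fintype.card_fin] at this
      exact eq_one_of_odd_pow hc2 ho this
  rw [hc1, one_smul] at hxs
  rw [hc1, inv_one, one_smul] at hys
  obtain ⟨w, hw, hxw⟩ := exists_takagi hx hxs.symm
  obtain ⟨z, hz, hyz⟩ := exists_takagi hy hys.symm
  have conjT : ∀ {k : ℕ} (M : Matrix (Fin k) (Fin k) ℂ), Mᴴ.map (starRingEnd ℂ) = Mᵀ := by
    intro k M; ext i j; simp
  have conjT' : ∀ {k : ℕ} {M : Matrix (Fin k) (Fin k) ℂ}, M ∈ Matrix.unitaryGroup (Fin k) ℂ →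
      Mᵀ * M.map (starRingEnd ℂ) = 1 := by
    intro k M hM
    have := congrArg Matrix.transpose (Matrix.mem_unitaryGroup_iff'.mp hM)
    rw [Matrix.transpose_mul, Matrix.transpose_one] at this
    exact this
  refine ⟨_, _, ⟨wᴴ, zᴴ, Unitary.star_mem hw, Unitary.star_mem hz, rfl, rfl⟩, ?_, ?_⟩
  · rw [Matrix.map_mul, hkm, conjT, conjT]
    conv_rhs => rw [hxu]
    rw [← Matrix.mul_assoc, ← Matrix.mul_kronecker_mul, hxw, hyz, ← Matrix.mul_assoc wᴴ,
      ← Matrix.mul_assoc zᴴ, ← Matrix.star_eq_conjTranspose, ← Matrix.star_eq_conjTranspose,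
      Matrix.mem_unitaryGroup_iff'.mp hw, Matrix.mem_unitaryGroup_iff'.mp hz, one_mul, one_mul]
  · simp only [Matrix.conjTranspose_conjTranspose]
    rw [Matrix.map_mul, hkm, hyv, Matrix.mul_assoc, ← Matrix.mul_kronecker_mul, hxw, hyz,
      mul_assoc w, mul_assoc z, conjT' hw, conjT' hz, mul_one, mul_one]

lemma conjInvariant_of_real (hu : u.map (starRingEnd ℂ) = u) (hv : v.map (starRingEnd ℂ) = v) :
    ConjInvariant d l r u v := by
  intro N _
  rw [brickwork_eq, Matrix.map_mul, piMat_map, ← Matrix.submatrix_map, piMat_map, hu, hv]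

lemma detUV_eq_one_or (hl : 1 ≤ l) (hr : 1 ≤ r) (hodd : Odd r ∨ Odd l)
    (hu : IsUnitaryPair d l r u v) (hc : ConjInvariant d l r u v) :
    detUV d l r u v = 1 ∨ detUV d l r u v = -1 := by
  obtain ⟨u', v', hg, hu', hv'⟩ := exists_real_gauge hl hr hodd hu hc
  obtain ⟨h1, h2, h3, h4⟩ := hg.isUnitaryPair hu
  rw [← hg.detUV_eq]
  set M := (u' * v').submatrix id (Prod.swap : Fin l × Fin r → Fin r × Fin l) with hM
  have hMM : M * Mᴴ = 1 := by
    rw [hM, Matrix.conjTranspose_submatrix,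
      ← Matrix.submatrix_mul _ _ _ _ _ Prod.swap_bijective, Matrix.conjTranspose_mul,
      Matrix.mul_assoc, ← Matrix.mul_assoc v', h4, Matrix.one_mul, h2, Matrix.submatrix_id_id]
  have hMr : M.map (starRingEnd ℂ) = M := by
    rw [hM, ← Matrix.submatrix_map, Matrix.map_mul, hu', hv']
  have hMH : Mᴴ = Mᵀ := by
    conv_rhs => rw [← hMr]
    rfl
  have := congrArg Matrix.det hMM
  rw [hMH, Matrix.det_mul, Matrix.det_transpose, Matrix.det_one] at this
  exact mul_self_eq_one_iff.mp this

lemma exists_real_det_neg_one {k : ℕ} (hk : 1 ≤ k) :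
    ∃ x ∈ Matrix.unitaryGroup (Fin k) ℂ, x.map (starRingEnd ℂ) = x ∧ x.det = -1 := by
  have : NeZero k := ⟨by omega⟩
  refine ⟨Matrix.diagonal (Function.update 1 0 (-1)), ?_, ?_, ?_⟩
  · rw [Matrix.mem_unitaryGroup_iff, Matrix.star_eq_conjTranspose, Matrix.diagonal_conjTranspose,
      Matrix.diagonal_mul_diagonal, ← Matrix.diagonal_one]
    congr 1
    funext i
    by_cases h : i = 0 <;> simp [h]
  · ext i j
    by_cases h : i = j
    · subst h
      by_cases h : i = 0 <;> simp [h]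
    · simp [h]
  · rw [Matrix.det_diagonal, Finset.prod_update_of_mem (Finset.mem_univ _)]
    simp

/-- Real representatives `a₁, a₂` of the same orientation, with equal `det(uv)`, are joined by
multiplying `a₁` and `b₁` by paths in the special orthogonal groups. -/
lemma strictEquiv_of_real {u₁ v₁ u₂ v₂ a₁ b₁ a₂ b₂}
    (hg₁ : GaugeRelated d l r u₁ v₁ a₁ b₁) (hg₂ : GaugeRelated d l r u₂ v₂ a₂ b₂)
    (h₁ : IsUnitaryPair d l r a₁ b₁) (h₂ : IsUnitaryPair d l r a₂ b₂)
    (ra₁ : a₁.map (starRingEnd ℂ) = a₁) (rb₁ : b₁.map (starRingEnd ℂ) = b₁)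
    (ra₂ : a₂.map (starRingEnd ℂ) = a₂) (rb₂ : b₂.map (starRingEnd ℂ) = b₂)
    (hdet : detUV d l r a₁ b₁ = detUV d l r a₂ b₂) (hdet0 : detUV d l r a₁ b₁ ≠ 0)
    (hO : (a₂ * a₁ᴴ).det = 1) : StrictEquivConj d l r u₁ v₁ u₂ v₂ := by
  obtain ⟨p1, p2, p3, p4⟩ := h₁
  obtain ⟨q1, q2, q3, q4⟩ := h₂
  have hcT : ∀ {a b : Type} {M : Matrix a b ℂ}, M.map (starRingEnd ℂ) = M →
      Mᴴ.map (starRingEnd ℂ) = Mᴴ := by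
    intro a b M h
    conv_rhs => rw [← h]
    rfl
  have hOa : (a₂ * a₁ᴴ) * a₁ = a₂ := by rw [Matrix.mul_assoc, p1, Matrix.mul_one]
  have hPb : b₁ * (b₁ᴴ * b₂) = b₂ := by rw [← Matrix.mul_assoc, p4, Matrix.one_mul]
  have hP : (b₁ᴴ * b₂).det = 1 := by
    have := detUV_mul (u := a₁) (v := b₁) (a₂ * a₁ᴴ) (b₁ᴴ * b₂)
    rw [hOa, hPb, hO, one_mul, ← hdet] at this
    exact mul_left_cancel₀ hdet0 (by rw [← this, mul_one])
  obtain ⟨p, pc, pu, pr, p0, p1'⟩ := exists_path_of_real (O := a₂ * a₁ᴴ)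
    (by
      rw [Matrix.mem_unitaryGroup_iff, Matrix.star_eq_conjTranspose, Matrix.conjTranspose_mul,
        Matrix.conjTranspose_conjTranspose, ← Matrix.mul_assoc, hOa, q2])
    (by rw [Matrix.map_mul, ra₂, hcT ra₁]) hO
  obtain ⟨q, qc, qu, qr, q0, q1'⟩ := exists_path_of_real (O := b₁ᴴ * b₂)
    (by
      rw [Matrix.mem_unitaryGroup_iff', Matrix.star_eq_conjTranspose, Matrix.conjTranspose_mul,
        Matrix.conjTranspose_conjTranspose, Matrix.mul_assoc, hPb, q3])
    (by rw [Matrix.map_mul, rb₂, hcT rb₁]) hP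
  refine ⟨fun t => p t * a₁, fun t => b₁ * q t, ?_, ?_, ?_, ?_, ?_, ?_⟩
  · exact (pc.matrix_mul continuous_const).continuousOn
  · exact (continuous_const.matrix_mul qc).continuousOn
  · intro t _
    have s1 := Matrix.mem_unitaryGroup_iff.mp (pu t)
    have s2 := Matrix.mem_unitaryGroup_iff'.mp (pu t)
    have s3 := Matrix.mem_unitaryGroup_iff.mp (qu t)
    have s4 := Matrix.mem_unitaryGroup_iff'.mp (qu t)
    rw [Matrix.star_eq_conjTranspose] at s1 s2 s3 s4
    refine ⟨?_, ?_, ?_, ?_⟩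
    · rw [Matrix.conjTranspose_mul, Matrix.mul_assoc, ← Matrix.mul_assoc _ (p t), s2,
        Matrix.one_mul, p1]
    · rw [Matrix.conjTranspose_mul, Matrix.mul_assoc, ← Matrix.mul_assoc a₁, p2,
        Matrix.one_mul, s1]
    · rw [Matrix.conjTranspose_mul, Matrix.mul_assoc, ← Matrix.mul_assoc _ b₁, p3,
        Matrix.one_mul, s4]
    · rw [Matrix.conjTranspose_mul, Matrix.mul_assoc, ← Matrix.mul_assoc (q t), s3,
        Matrix.one_mul, p4]
  · simpa only [p0, q0, Matrix.one_mul, Matrix.mul_one] using hg₁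
  · simpa only [p1', q1', hOa, hPb] using hg₂
  · intro t _
    exact conjInvariant_of_real (by rw [Matrix.map_mul, pr, ra₁]) (by rw [Matrix.map_mul, qr, rb₁])

end Main

/-- If `r` or `ℓ` is odd, two conjugation-invariant brickwork MPUs are strictly equivalent
under conjugation iff `det(u₁v₁) = det(u₂v₂)`. -/
theorem stmt13 (d l r : ℕ) (hd : 1 ≤ d) (hl : 1 ≤ l) (hr : 1 ≤ r) (hrl : r * l = d ^ 2)
    (hodd : Odd r ∨ Odd l)
    (u₁ : Matrix (Fin l × Fin r) (Fin d × Fin d) ℂ)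
    (v₁ : Matrix (Fin d × Fin d) (Fin r × Fin l) ℂ)
    (u₂ : Matrix (Fin l × Fin r) (Fin d × Fin d) ℂ)
    (v₂ : Matrix (Fin d × Fin d) (Fin r × Fin l) ℂ)
    (hu₁ : IsUnitaryPair d l r u₁ v₁) (hu₂ : IsUnitaryPair d l r u₂ v₂)
    (hc₁ : ConjInvariant d l r u₁ v₁) (hc₂ : ConjInvariant d l r u₂ v₂) :
    StrictEquivConj d l r u₁ v₁ u₂ v₂ ↔ detUV d l r u₁ v₁ = detUV d l r u₂ v₂ := by
  constructor
  · rintro ⟨u, v, cu, cv, hU, hg₁, hg₂, hC⟩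
    rw [← hg₁.detUV_eq, ← hg₂.detUV_eq]
    have hcont : ContinuousOn (fun t => detUV d l r (u t) (v t)) (Set.Icc 0 1) := by
      have hm : ContinuousOn (fun t => u t * v t) (Set.Icc 0 1) :=
        (Continuous.matrix_mul continuous_fst continuous_snd).comp_continuousOn (cu.prodMk cv)
      exact (Continuous.matrix_det
        (continuous_id.matrix_submatrix id Prod.swap)).comp_continuousOn hm
    refine isPreconnected_Icc.constant_of_mapsTo (T := ({1, -1} : Set ℂ))
      (Set.toFinite _).isDiscrete hcont ?_ (by simp) (by simp)
    intro t ht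
    exact detUV_eq_one_or hl hr hodd (hU t ht) (hC t ht)
  · intro hdet
    obtain ⟨a₁, b₁, hg₁, ra₁, rb₁⟩ := exists_real_gauge hl hr hodd hu₁ hc₁
    obtain ⟨a₂, b₂, hg₂, ra₂, rb₂⟩ := exists_real_gauge hl hr hodd hu₂ hc₂
    have h₁ := hg₁.isUnitaryPair hu₁
    have h₂ := hg₂.isUnitaryPair hu₂
    have hdet' : detUV d l r a₁ b₁ = detUV d l r a₂ b₂ := by
      rw [hg₁.detUV_eq, hg₂.detUV_eq, hdet]
    have hdet0 : detUV d l r a₁ b₁ ≠ 0 := by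
      rw [hg₁.detUV_eq]
      rcases detUV_eq_one_or hl hr hodd hu₁ hc₁ with h | h <;> simp [h]
    have hOO : (a₂ * a₁ᴴ).det = 1 ∨ (a₂ * a₁ᴴ).det = -1 := by
      have hT : (a₂ * a₁ᴴ)ᴴ = (a₂ * a₁ᴴ)ᵀ := by
        have h : (a₂ * a₁ᴴ).map (starRingEnd ℂ) = a₂ * a₁ᴴ := by
          have h' : a₁ᴴ.map (starRingEnd ℂ) = a₁ᴴ := by
            conv_rhs => rw [← ra₁]
            rfl
          rw [Matrix.map_mul, ra₂, h']
        conv_rhs => rw [← h]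
        rfl
      have hU : (a₂ * a₁ᴴ) * (a₂ * a₁ᴴ)ᴴ = 1 := by
        rw [Matrix.conjTranspose_mul, Matrix.conjTranspose_conjTranspose, Matrix.mul_assoc,
          ← Matrix.mul_assoc _ a₁, h₁.1, Matrix.one_mul, h₂.2.1]
      have := congrArg Matrix.det hU
      rw [hT, Matrix.det_mul, Matrix.det_transpose, Matrix.det_one] at this
      exact mul_self_eq_one_iff.mp this
    rcases hOO with hO | hO
    · exact strictEquiv_of_real hg₁ hg₂ h₁ h₂ ra₁ rb₁ ra₂ rb₂ hdet' hdet0 hO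
    -- The opposite orientation is repaired by a real gauge transformation with `det (x ⊗ y) = -1`;
    -- `det (x ⊗ y) = (det x) ^ r * (det y) ^ l`, so one exists because `r` or `l` is odd.
    obtain ⟨x, hx, y, hy, rx, ry, hxy⟩ : ∃ x ∈ Matrix.unitaryGroup (Fin l) ℂ,
        ∃ y ∈ Matrix.unitaryGroup (Fin r) ℂ, x.map (starRingEnd ℂ) = x ∧
          y.map (starRingEnd ℂ) = y ∧ (x ⊗ₖ y).det = -1 := by
      rcases hodd with ho | ho
      · obtain ⟨x, hx, rx, dx⟩ := exists_real_det_neg_one hl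
        refine ⟨x, hx, 1, one_mem _, rx, Matrix.map_one _ (map_zero _) (map_one _), ?_⟩
        rw [Matrix.det_kronecker, dx, Matrix.det_one, Fintype.card_fin, ho.neg_one_pow]
        simp
      · obtain ⟨y, hy, ry, dy⟩ := exists_real_det_neg_one hr
        refine ⟨1, one_mem _, y, hy, Matrix.map_one _ (map_zero _) (map_one _), ry, ?_⟩
        rw [Matrix.det_kronecker, dy, Matrix.det_one, Fintype.card_fin, Fintype.card_fin,
          ho.neg_one_pow]
        simp
    have hg : GaugeRelated d l r a₂ b₂ ((x ⊗ₖ y) * a₂) (b₂ * (yᴴ ⊗ₖ xᴴ)) :=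
      ⟨x, y, hx, hy, rfl, rfl⟩
    refine strictEquiv_of_real hg₁ (hg₂.trans hg) h₁ (hg.isUnitaryPair h₂) ra₁ rb₁ ?_ ?_
      (hdet'.trans hg.detUV_eq.symm) hdet0 ?_
    · rw [Matrix.map_mul, ra₂]
      congr 1
      conv_rhs => rw [← rx, ← ry]
      ext i j; simp
    · rw [Matrix.map_mul, rb₂]
      congr 1
      conv_rhs => rw [← rx, ← ry]
      ext i j; simp
    · rw [Matrix.mul_assoc, Matrix.det_mul, hxy, hO]
      norm_num
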